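/- For every multi-level apportionment instance, every non-negative integer h, and every tie-breaking, the allocation of h seats produced by the multi-level quota method fulfills lower quota. Moreover, the method satisfies house monotonicity: when the total number of seats increases from h to h+1, every node receives at least as many seats as before. -/

import Mathlib

/-- A multi-level apportionment instance: a rooted tree on nodes `0, …, n`
(root `0`, encoded by a parent function with `parent i < i` for `i ≠ 0`),
together with entitlements `W`. -/
structure MLA where
  n : ℕ
  parent : Fin (n + 1) → Fin (n + 1)
  parent_lt : ∀ i : Fin (n + 1), i ≠ 0 → (parent i : ℕ) < (i : ℕ)
  W : Fin (n + 1) → ℝ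
  W_pos : ∀ i, 0 < W i
  W_le_one : ∀ i, W i ≤ 1
  W_root : W 0 = 1
  W_sum : ∀ i : Fin (n + 1),
    (Finset.univ.filter (fun c => c ≠ 0 ∧ parent c = i)).Nonempty →
    ∑ c ∈ Finset.univ.filter (fun c => c ≠ 0 ∧ parent c = i), W c = 1

namespace MLA

variable (T : MLA)

/-- The set of children of node `i`. -/
def children (i : Fin (T.n + 1)) : Finset (Fin (T.n + 1)) :=
  Finset.univ.filter (fun c => c ≠ 0 ∧ T.parent c = i)

/-- The ancestor set `A(i)`: `A(0) = {0}` and `A(i) = {parent i} ∪ A(parent i)`. -/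
def ancestors (i : Fin (T.n + 1)) : Finset (Fin (T.n + 1)) :=
  if h : i = 0 then {0} else insert (T.parent i) (ancestors (T.parent i))
termination_by (i : ℕ)
decreasing_by exact T.parent_lt i h

/-- The entitlement of node `i` relative to the root: `R i = ∏_{a ∈ A(i) ∪ {i}} W a`. -/
def R (i : Fin (T.n + 1)) : ℝ := ∏ a ∈ insert i (T.ancestors i), T.W a

/-- `V` is an allocation of `h` seats. -/
def IsAlloc (h : ℕ) (V : Fin (T.n + 1) → ℕ) : Prop :=
  V 0 = h ∧ ∀ i, (T.children i).Nonempty → V i = ∑ c ∈ T.children i, V c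

/-- `V` fulfills lower quota: `V i ≥ LQ i = max_{a ∈ A(i)} ⌊(R i / R a) · V a⌋`. -/
def FulfillsLowerQuota (V : Fin (T.n + 1) → ℕ) : Prop :=
  ∀ i, ∀ a ∈ T.ancestors i, ⌊T.R i / T.R a * (V a : ℝ)⌋ ≤ (V i : ℤ)

/-- `V` fulfills upper quota: `V i ≤ UQ i = min_{a ∈ A(i)} ⌈(R i / R a) · V a⌉`. -/
def FulfillsUpperQuota (V : Fin (T.n + 1) → ℕ) : Prop :=
  ∀ i, ∀ a ∈ T.ancestors i, (V i : ℤ) ≤ ⌈T.R i / T.R a * (V a : ℝ)⌉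


/-- `P` is the set of nodes receiving the new seat in one step of an iterative
method with selection criterion `crit` (to be minimized among children) and
eligibility constraint `elig`: `P` is a root-to-leaf path, each non-root node on
the path is an eligible child of its parent minimizing `crit` among all eligible
children, and the seat counts along `P` each increase by one. -/
def IsStepWith (crit : (Fin (T.n + 1) → ℕ) → Fin (T.n + 1) → ℝ)
    (elig : (Fin (T.n + 1) → ℕ) → Fin (T.n + 1) → Prop)
    (P : Finset (Fin (T.n + 1))) (Vh Vh1 : Fin (T.n + 1) → ℕ) : Prop :=
  (0 : Fin (T.n + 1)) ∈ P ∧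
  (∀ i ∈ P, i ≠ 0 → T.parent i ∈ P) ∧
  (∀ i ∈ P, (T.children i).Nonempty → ∃ c ∈ T.children i, c ∈ P) ∧
  (∀ c ∈ P, ∀ d ∈ P, c ≠ 0 → d ≠ 0 → T.parent c = T.parent d → c = d) ∧
  (∀ c ∈ P, c ≠ 0 → elig Vh c ∧
    ∀ d ∈ T.children (T.parent c), elig Vh d → crit Vh c ≤ crit Vh d) ∧
  (∀ i, Vh1 i = Vh i + if i ∈ P then 1 else 0)

/-- `V : ℕ → (nodes → ℕ)` is a run of the iterative method given by `crit` and
`elig` (with arbitrary tie-breaking): `V 0` is the all-zero allocation and each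
`V (h+1)` is obtained from `V h` by allocating one more seat along a path. -/
def IsRun (crit : (Fin (T.n + 1) → ℕ) → Fin (T.n + 1) → ℝ)
    (elig : (Fin (T.n + 1) → ℕ) → Fin (T.n + 1) → Prop)
    (V : ℕ → Fin (T.n + 1) → ℕ) : Prop :=
  (∀ i, V 0 i = 0) ∧ ∀ h, ∃ P, T.IsStepWith crit elig P (V h) (V (h + 1))

/-- Adams' criterion: a child `c` minimizing `V c / R c` receives the seat. -/
noncomputable def adamsCrit (V : Fin (T.n + 1) → ℕ) (c : Fin (T.n + 1)) : ℝ :=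
  (V c : ℝ) / T.R c

/-- Jefferson's criterion: a child `c` minimizing `(V c + 1) / R c` receives the seat. -/
noncomputable def jeffersonCrit (V : Fin (T.n + 1) → ℕ) (c : Fin (T.n + 1)) : ℝ :=
  ((V c : ℝ) + 1) / T.R c

/-- Trivial eligibility constraint: every child is eligible. -/
def trivElig (_ : Fin (T.n + 1) → ℕ) (_ : Fin (T.n + 1)) : Prop := True

/-- Eligibility constraint of the quota method: `V c / W c < V (parent c) + 1`. -/
def quotaElig (V : Fin (T.n + 1) → ℕ) (c : Fin (T.n + 1)) : Prop :=
  (V c : ℝ) / T.W c < (V (T.parent c) : ℝ) + 1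

/-- Eligibility constraint of the upper-compliant quota method:
`V c / R c < (V a + 1) / R a` for every ancestor `a` of `c`. -/
def ucElig (V : Fin (T.n + 1) → ℕ) (c : Fin (T.n + 1)) : Prop :=
  ∀ a ∈ T.ancestors c, (V c : ℝ) / T.R c < ((V a : ℝ) + 1) / T.R a

end MLA

/-!
Multiplying the child inequalities `W c * (V (parent c) + 1) ≤ V c + 1` along a path gives
`R i / R a * (V a + 1) ≤ V i + 1`, which implies lower quota.

For the child inequality, fix a node and regard each seat of its children as a unit job: the `k`-th
seat of `c` is due at time `k / W c`, where time is the number of seats of the fixed node. The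
method serves an available job with earliest deadline. At time `s`, at most `max 0 (l - s)` of the
jobs due by `l` are outstanding. This survives the service of a job due by `l`. If the job served is
due later, every child `c` with an outstanding job due by `l` is ineligible, so it already has
`W c * (s + 1)` seats and at most `(l - (s + 1)) * W c` outstanding jobs due by `l`. Taking
`l = (V c + 1) / W c`, when the next job of `c` is outstanding, gives `l ≥ s + 1`, which is the
child inequality.
-/

section Scheduling

variable {ι K : Type*} [Field K] [LinearOrder K] [FloorSemiring K]
  {S : Finset ι} {w : ι → K} {s : ℕ} {x y : ι → ℕ} {l : K}

/-- The number of seats of members of `S` that are due by `l` but not yet allocated in `x`, where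
the `k`-th seat of `i` is due at `k / w i`. Truncated subtraction discards surplus seats. -/
def outstandingDemand (S : Finset ι) (w : ι → K) (x : ι → ℕ) (l : K) : ℕ :=
  ∑ i ∈ S, (⌊l * w i⌋₊ - x i)

/-- The demand criterion of deadline scheduling: with seat counts `x` at time `s`, the outstanding
seats due by any deadline `l` fit into the time remaining until `l`. -/
def IsSchedulable (S : Finset ι) (w : ι → K) (s : ℕ) (x : ι → ℕ) : Prop :=
  ∀ l : K, (outstandingDemand S w x l : K) ≤ max 0 (l - s)

theorem outstandingDemand_anti (hxy : ∀ i ∈ S, x i ≤ y i) :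
    outstandingDemand S w y l ≤ outstandingDemand S w x l :=
  Finset.sum_le_sum fun i hi => Nat.sub_le_sub_left (hxy i hi) _

theorem outstandingDemand_lt {d : ι} (hd : d ∈ S) (hxy : ∀ i ∈ S, x i ≤ y i)
    (hlt : x d < y d) (hdue : (x d : K) + 1 ≤ l * w d) :
    outstandingDemand S w y l < outstandingDemand S w x l := by
  have hfloor : x d + 1 ≤ ⌊l * w d⌋₊ := Nat.le_floor (by exact_mod_cast hdue)
  exact Finset.sum_lt_sum (fun i hi => Nat.sub_le_sub_left (hxy i hi) _) ⟨d, hd, by omega⟩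

variable [IsStrictOrderedRing K]

theorem outstandingDemand_le_max (hw : ∀ i ∈ S, 0 ≤ w i) (hsum : ∑ i ∈ S, w i ≤ 1)
    (hshare : ∀ i ∈ S, (x i : K) + 1 ≤ l * w i → w i * s ≤ x i) :
    (outstandingDemand S w x l : K) ≤ max 0 (l - s) := by
  have hterm : ∀ i ∈ S, ((⌊l * w i⌋₊ - x i : ℕ) : K) ≤ max 0 (l - s) * w i := by
    intro i hi
    rcases le_or_gt ⌊l * w i⌋₊ (x i) with hle | hlt
    · rw [Nat.sub_eq_zero_of_le hle, Nat.cast_zero]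
      exact mul_nonneg (le_max_left _ _) (hw i hi)
    · have hfloor : (⌊l * w i⌋₊ : K) ≤ l * w i :=
        Nat.floor_le (Nat.pos_of_floor_pos (Nat.zero_lt_of_lt hlt)).le
      have hdue : (x i : K) + 1 ≤ l * w i := le_trans (by exact_mod_cast hlt) hfloor
      calc ((⌊l * w i⌋₊ - x i : ℕ) : K) = ⌊l * w i⌋₊ - x i := Nat.cast_sub hlt.le
        _ ≤ l * w i - w i * s := sub_le_sub hfloor (hshare i hi hdue)
        _ = (l - s) * w i := by ring
        _ ≤ max 0 (l - s) * w i := mul_le_mul_of_nonneg_right (le_max_right _ _) (hw i hi)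
  calc (outstandingDemand S w x l : K) = ∑ i ∈ S, ((⌊l * w i⌋₊ - x i : ℕ) : K) := Nat.cast_sum _ _
    _ ≤ ∑ i ∈ S, max 0 (l - s) * w i := Finset.sum_le_sum hterm
    _ = max 0 (l - s) * ∑ i ∈ S, w i := (Finset.mul_sum _ _ _).symm
    _ ≤ max 0 (l - s) := mul_le_of_le_one_right (le_max_left _ _) hsum

namespace IsSchedulable

theorem zero (hw : ∀ i ∈ S, 0 ≤ w i) (hsum : ∑ i ∈ S, w i ≤ 1) :
    IsSchedulable S w 0 0 :=
  fun _ => outstandingDemand_le_max hw hsum fun _ _ _ => by simp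

theorem mono (h : IsSchedulable S w s x) (hxy : ∀ i ∈ S, x i ≤ y i) :
    IsSchedulable S w s y :=
  fun l => (Nat.cast_le.2 (outstandingDemand_anti hxy)).trans (h l)

theorem succ (h : IsSchedulable S w s x) (hw : ∀ i ∈ S, 0 < w i) (hsum : ∑ i ∈ S, w i ≤ 1)
    (hxy : ∀ i ∈ S, x i ≤ y i) {d : ι} (hd : d ∈ S) (hlt : x d < y d)
    (hmin : ∀ i ∈ S, (x i : K) < w i * (s + 1) → ((x d : K) + 1) / w d ≤ ((x i : K) + 1) / w i) :
    IsSchedulable S w (s + 1) y := by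
  intro l
  rcases le_or_gt ((x d : K) + 1) (l * w d) with hdue | hlate
  · have hserved : (outstandingDemand S w y l : K) + 1 ≤ outstandingDemand S w x l := by
      exact_mod_cast outstandingDemand_lt hd hxy hlt hdue
    have hpos : (0 : K) < outstandingDemand S w x l :=
      (Nat.cast_add_one_pos _).trans_le hserved
    have hbound : (outstandingDemand S w x l : K) ≤ l - s :=
      (le_max_iff.1 (h l)).resolve_left hpos.not_ge
    refine le_max_of_le_right ?_
    push_cast
    linarith
  · refine (Nat.cast_le.2 (outstandingDemand_anti hxy)).trans
      (outstandingDemand_le_max (fun i hi => (hw i hi).le) hsum fun i hi hdue => ?_)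
    by_contra! hshare
    have hfirst := hmin i hi (by exact_mod_cast hshare)
    have hdue' : ((x i : K) + 1) / w i ≤ l := (div_le_iff₀ (hw i hi)).2 hdue
    have hlate' : l < ((x d : K) + 1) / w d := (lt_div_iff₀ (hw d hd)).2 hlate
    exact (hlate'.trans_le hfirst).not_ge hdue'

theorem weight_mul_succ_le (h : IsSchedulable S w s x) {c : ι} (hc : c ∈ S) (hwc : 0 < w c) :
    w c * (s + 1) ≤ (x c : K) + 1 := by
  by_contra! hlt
  set l : K := (x c + 1) / w c
  have hdue : l * w c = x c + 1 := div_mul_cancel₀ _ hwc.ne'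
  have hls : l < s + 1 := (div_lt_iff₀' hwc).2 hlt
  have hone : (1 : K) ≤ outstandingDemand S w x l := by
    have hfloor : ⌊l * w c⌋₊ = x c + 1 := by rw [hdue]; exact_mod_cast Nat.floor_natCast (x c + 1)
    have hterm : ⌊l * w c⌋₊ - x c ≤ outstandingDemand S w x l :=
      Finset.single_le_sum (f := fun i => ⌊l * w i⌋₊ - x i) (fun _ _ => Nat.zero_le _) hc
    exact_mod_cast (show 1 ≤ outstandingDemand S w x l by omega)
  exact (hone.trans (h l)).not_gt (max_lt one_pos (by linarith))

end IsSchedulable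

end Scheduling

namespace MLA

section Tree

variable {T : MLA}

theorem mem_children {c p : Fin (T.n + 1)} : c ∈ T.children p ↔ c ≠ 0 ∧ T.parent c = p := by
  simp [children]

theorem ancestors_zero : T.ancestors 0 = {0} := by
  rw [ancestors, dif_pos rfl]

theorem ancestors_of_ne_zero {i : Fin (T.n + 1)} (hi : i ≠ 0) :
    T.ancestors i = insert (T.parent i) (T.ancestors (T.parent i)) := by
  rw [ancestors, dif_neg hi]

theorem parent_induction {motive : Fin (T.n + 1) → Prop} (zero : motive 0)
    (of_parent : ∀ i, i ≠ 0 → motive (T.parent i) → motive i) (i : Fin (T.n + 1)) : motive i := by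
  induction i using WellFoundedLT.induction with
  | ind i ih =>
    rcases eq_or_ne i 0 with rfl | hi
    · exact zero
    · exact of_parent i hi (ih _ (T.parent_lt i hi))

theorem le_of_mem_ancestors {i a : Fin (T.n + 1)} (ha : a ∈ T.ancestors i) : a ≤ i := by
  induction i using parent_induction with
  | zero => rw [ancestors_zero, Finset.mem_singleton] at ha; exact ha.le
  | of_parent i hi ih =>
    rw [ancestors_of_ne_zero hi, Finset.mem_insert] at ha
    have hlt : T.parent i < i := T.parent_lt i hi
    rcases ha with rfl | ha
    · exact hlt.le
    · exact (ih ha).trans hlt.le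

theorem R_pos (i : Fin (T.n + 1)) : 0 < T.R i :=
  Finset.prod_pos fun a _ => T.W_pos a

theorem R_eq_W_mul_R_parent {i : Fin (T.n + 1)} (hi : i ≠ 0) :
    T.R i = T.W i * T.R (T.parent i) := by
  have hlt : T.parent i < i := T.parent_lt i hi
  have hmem : i ∉ T.ancestors i := by
    rw [ancestors_of_ne_zero hi, Finset.mem_insert, not_or]
    exact ⟨hlt.ne', fun h => (le_of_mem_ancestors h).not_gt hlt⟩
  rw [R, Finset.prod_insert hmem, ancestors_of_ne_zero hi, R]

theorem div_mul_succ_le_of_mem_ancestors {x : Fin (T.n + 1) → ℕ}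
    (hx : ∀ c, c ≠ 0 → T.W c * ((x (T.parent c) : ℝ) + 1) ≤ (x c : ℝ) + 1)
    {i a : Fin (T.n + 1)} (ha : a ∈ T.ancestors i) :
    T.R i / T.R a * ((x a : ℝ) + 1) ≤ (x i : ℝ) + 1 := by
  induction i using parent_induction with
  | zero =>
    rw [ancestors_zero, Finset.mem_singleton] at ha
    rw [ha, div_self (R_pos 0).ne', one_mul]
  | of_parent i hi ih =>
    rw [ancestors_of_ne_zero hi, Finset.mem_insert] at ha
    have hparent : T.R (T.parent i) / T.R a * ((x a : ℝ) + 1) ≤ (x (T.parent i) : ℝ) + 1 := by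
      rcases ha with rfl | ha
      · rw [div_self (R_pos _).ne', one_mul]
      · exact ih ha
    calc T.R i / T.R a * ((x a : ℝ) + 1)
        = T.W i * (T.R (T.parent i) / T.R a * ((x a : ℝ) + 1)) := by
          rw [R_eq_W_mul_R_parent hi]; ring
      _ ≤ T.W i * ((x (T.parent i) : ℝ) + 1) := mul_le_mul_of_nonneg_left hparent (T.W_pos i).le
      _ ≤ (x i : ℝ) + 1 := hx i hi

theorem fulfillsLowerQuota_of_forall_mul_succ_le {x : Fin (T.n + 1) → ℕ}
    (hx : ∀ c, c ≠ 0 → T.W c * ((x (T.parent c) : ℝ) + 1) ≤ (x c : ℝ) + 1) :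
    T.FulfillsLowerQuota x := by
  intro i a ha
  have hpath := div_mul_succ_le_of_mem_ancestors hx ha
  have hratio : 0 < T.R i / T.R a := div_pos (R_pos i) (R_pos a)
  rw [← Int.lt_add_one_iff, Int.floor_lt]
  push_cast
  linarith

end Tree

section Run

variable {T : MLA} {crit : (Fin (T.n + 1) → ℕ) → Fin (T.n + 1) → ℝ}
  {elig : (Fin (T.n + 1) → ℕ) → Fin (T.n + 1) → Prop} {P : Finset (Fin (T.n + 1))}
  {x y : Fin (T.n + 1) → ℕ} {V : ℕ → Fin (T.n + 1) → ℕ}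

theorem quotaElig_iff {c : Fin (T.n + 1)} :
    T.quotaElig x c ↔ (x c : ℝ) < T.W c * ((x (T.parent c) : ℝ) + 1) :=
  div_lt_iff₀' (T.W_pos c)

theorem jeffersonCrit_le_iff {c d : Fin (T.n + 1)} (hc : c ≠ 0) (hd : d ≠ 0)
    (hcd : T.parent c = T.parent d) :
    T.jeffersonCrit x c ≤ T.jeffersonCrit x d ↔
      ((x c : ℝ) + 1) / T.W c ≤ ((x d : ℝ) + 1) / T.W d := by
  rw [jeffersonCrit, jeffersonCrit, R_eq_W_mul_R_parent hc, R_eq_W_mul_R_parent hd, hcd,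
    ← div_div, ← div_div, div_le_div_iff_of_pos_right (R_pos _)]

theorem IsStepWith.le (hstep : T.IsStepWith crit elig P x y) (i : Fin (T.n + 1)) : x i ≤ y i := by
  obtain ⟨-, -, -, -, -, hy⟩ := hstep
  exact hy i ▸ Nat.le_add_right _ _

theorem IsStepWith.isSchedulable (hstep : T.IsStepWith T.jeffersonCrit elig P x y)
    (helig : ∀ c, T.quotaElig x c → elig x c) {p : Fin (T.n + 1)} (hp : (T.children p).Nonempty)
    (h : IsSchedulable (T.children p) T.W (x p) x) :
    IsSchedulable (T.children p) T.W (y p) y := by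
  have hle : ∀ i ∈ T.children p, x i ≤ y i := fun i _ => hstep.le i
  obtain ⟨-, -, hchild, -, hmin, hy⟩ := hstep
  by_cases hpP : p ∈ P
  · obtain ⟨d, hd, hdP⟩ := hchild p hpP hp
    obtain ⟨hd0, rfl⟩ := mem_children.1 hd
    have hlt : x d < y d := by simp [hy, hdP]
    have hyp : y (T.parent d) = x (T.parent d) + 1 := by simp [hy, hpP]
    rw [hyp]
    refine h.succ (fun i _ => T.W_pos i) (T.W_sum _ hp).le hle hd hlt fun i hi hshare => ?_
    obtain ⟨hi0, hid⟩ := mem_children.1 hi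
    have hquota : T.quotaElig x i := quotaElig_iff.2 (by rwa [hid])
    exact (jeffersonCrit_le_iff hd0 hi0 hid.symm).1 ((hmin d hdP hd0).2 i hi (helig i hquota))
  · have hyp : y p = x p := by simp [hy, hpP]
    rw [hyp]
    exact h.mono hle

theorem IsRun.isSchedulable (hrun : T.IsRun T.jeffersonCrit elig V)
    (helig : ∀ x c, T.quotaElig x c → elig x c) {p : Fin (T.n + 1)} (hp : (T.children p).Nonempty)
    (h : ℕ) : IsSchedulable (T.children p) T.W (V h p) (V h) := by
  induction h with
  | zero =>
    rw [show V 0 = 0 from funext hrun.1]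
    exact .zero (fun i _ => (T.W_pos i).le) (T.W_sum p hp).le
  | succ h ih =>
    obtain ⟨P, hstep⟩ := hrun.2 h
    exact hstep.isSchedulable (helig _) hp ih

end Run

end MLA

/-- Taking `elig = T.trivElig` gives the multi-level Jefferson method. -/
theorem quota_method_lower_quota_and_house_monotone_general (T : MLA)
    (elig : (Fin (T.n + 1) → ℕ) → Fin (T.n + 1) → Prop)
    (helig : ∀ x c, T.quotaElig x c → elig x c) (V : ℕ → Fin (T.n + 1) → ℕ)
    (hrun : T.IsRun T.jeffersonCrit elig V) :
    (∀ h : ℕ, T.FulfillsLowerQuota (V h)) ∧ (∀ h : ℕ, ∀ i, V h i ≤ V (h + 1) i) := by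
  refine ⟨fun h => MLA.fulfillsLowerQuota_of_forall_mul_succ_le fun c hc => ?_, fun h i => ?_⟩
  · have hmem : c ∈ T.children (T.parent c) := MLA.mem_children.2 ⟨hc, rfl⟩
    exact (hrun.isSchedulable helig ⟨c, hmem⟩ h).weight_mul_succ_le hmem (T.W_pos c)
  · obtain ⟨P, hstep⟩ := hrun.2 h
    exact hstep.le i

/-- Any run of the multi-level quota method fulfills lower
quota after every number of seats, and satisfies house monotonicity. -/
theorem quota_method_lower_quota_and_house_monotone (T : MLA)
    (V : ℕ → Fin (T.n + 1) → ℕ)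
    (hrun : T.IsRun T.jeffersonCrit T.quotaElig V) :
    (∀ h : ℕ, T.FulfillsLowerQuota (V h)) ∧ (∀ h : ℕ, ∀ i, V h i ≤ V (h + 1) i) :=
  quota_method_lower_quota_and_house_monotone_general T T.quotaElig (fun _ _ => id) V hrun
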